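/- Let d be a positive integer and let r : {1,…,d} → Z≥0 be a function such that Σ_{i=1}^d r(i) = d. For a bijection π ∈ S_d^0, the function π + r (defined pointwise) belongs to S_d if and only if for every t ∈ {1,…,d} with r(t) > 0 one has π(t) = Σ_{j : π(j) < π(t)} r(j). -/

import Mathlib

/-- `π` is a bijection from `{1,…,d}` (indexed by `Fin d`) onto `{0,…,d-1}`,
`π + r ∈ S_d` means `fun i => π i + r i` is a bijection onto `{1,…,d}`. -/
theorem stmt15 (d : ℕ) (hd : 0 < d) (r : Fin d → ℕ) (hr : ∑ i, r i = d)
    (π : Fin d → ℕ) (hπinj : Function.Injective π) (hπlt : ∀ i, π i < d) :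
    (Function.Injective (fun i => π i + r i) ∧ ∀ i, 1 ≤ π i + r i ∧ π i + r i ≤ d) ↔
      ∀ t : Fin d, 0 < r t →
        π t = ∑ j ∈ Finset.univ.filter fun j => π j < π t, r j := by
  have hsurj : ∀ k < d, ∃ i, π i = k := by
    have h1 : Finset.univ.image π = Finset.range d := by
      apply Finset.eq_of_subset_of_card_le
      · intro x hx
        obtain ⟨i, -, rfl⟩ := Finset.mem_image.1 hx
        exact Finset.mem_range.2 (hπlt i)
      · rw [Finset.card_image_of_injective _ hπinj]; simp
    intro k hk
    rw [← Finset.mem_range, ← h1] at hk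
    simpa using hk
  constructor
  · rintro ⟨hinj, hb⟩ t ht
    have hsurj2 : ∀ v, 1 ≤ v → v ≤ d → ∃ i, π i + r i = v := by
      have h1 : Finset.univ.image (fun i => π i + r i) = Finset.Icc 1 d := by
        apply Finset.eq_of_subset_of_card_le
        · intro x hx
          obtain ⟨i, -, rfl⟩ := Finset.mem_image.1 hx
          exact Finset.mem_Icc.2 (hb i)
        · rw [Finset.card_image_of_injective _ hinj]; simp
      intro k hk hk'
      have := Finset.mem_Icc.2 ⟨hk, hk'⟩
      rw [← h1] at this
      simpa using this
    set T := Finset.univ.filter fun j => π j < π t with hT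
    have e1 : T.image π = Finset.range (π t) := by
      ext v
      simp only [hT, Finset.mem_image, Finset.mem_filter, Finset.mem_univ, true_and,
        Finset.mem_range]
      constructor
      · rintro ⟨i, hi, rfl⟩; exact hi
      · intro hv
        obtain ⟨i, rfl⟩ := hsurj v (hv.trans (hπlt t))
        exact ⟨i, hv, rfl⟩
    have c1 : T.card = π t := by
      rw [← Finset.card_image_of_injective T hπinj, e1, Finset.card_range]
    have e2 : Finset.Icc 1 (π t) = T.image (fun i => π i + r i) := by
      apply Finset.eq_of_subset_of_card_le
      · intro v hv
        obtain ⟨h1, h2⟩ := Finset.mem_Icc.1 hv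
        obtain ⟨i, hi⟩ := hsurj2 v h1 (h2.trans (hπlt t).le)
        refine Finset.mem_image.2 ⟨i, ?_, hi⟩
        simp only [hT, Finset.mem_filter, Finset.mem_univ, true_and]
        by_contra hc
        have : π i = π t := by omega
        have h3 := hπinj this
        subst h3
        omega
      · rw [Finset.card_image_of_injective _ hinj, c1]; simp
    have s1 : ∑ v ∈ Finset.range (π t), v = ∑ i ∈ T, π i := by
      rw [← e1, Finset.sum_image (fun a _ b _ h => hπinj h)]
    have s2 : ∑ v ∈ Finset.Icc 1 (π t), v = ∑ i ∈ T, (π i + r i) := by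
      rw [e2, Finset.sum_image (fun a _ b _ h => hinj h)]
    have s3 : ∀ n : ℕ, ∑ v ∈ Finset.Icc 1 n, v = ∑ v ∈ Finset.range n, v + n := by
      intro n
      induction n with
      | zero => simp
      | succ n ih => rw [Finset.sum_Icc_succ_top (by omega), ih, Finset.sum_range_succ]
    rw [s3, s1, Finset.sum_add_distrib] at s2
    omega
  · intro h
    obtain ⟨P, hP⟩ : ∃ P : ℕ → ℕ, ∀ m, P m = ∑ j ∈ Finset.univ.filter (fun j => π j < m), r j :=
      ⟨_, fun _ => rfl⟩
    have h' : ∀ t, 0 < r t → P (π t) = π t := fun t ht => by rw [hP]; exact (h t ht).symm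
    have hsucc : ∀ t, P (π t + 1) = P (π t) + r t := by
      intro t
      rw [hP, hP]
      have : (Finset.univ.filter fun j => π j < π t + 1) =
          insert t (Finset.univ.filter fun j => π j < π t) := by
        ext j
        simp only [Finset.mem_filter, Finset.mem_univ, true_and, Finset.mem_insert]
        rw [← hπinj.eq_iff]; omega
      rw [this, Finset.sum_insert (by simp), add_comm]
    have hmono : Monotone P := by
      intro a b hab
      rw [hP, hP]
      apply Finset.sum_le_sum_of_subset
      intro j
      simp only [Finset.mem_filter, Finset.mem_univ, true_and]
      omega
    have hPd : P d = d := by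
      rw [hP, Finset.filter_true_of_mem (fun i _ => hπlt i), hr]
    have hge : ∀ n m, m + n = d → m ≤ P m := by
      intro n
      induction n with
      | zero => intro m hm; have : m = d := by omega
                rw [this, hPd]
      | succ n ih =>
        intro m hm
        obtain ⟨t, rfl⟩ := hsurj m (by omega)
        have h1 := ih (π t + 1) (by omega)
        rw [hsucc] at h1
        rcases Nat.eq_zero_or_pos (r t) with h0 | h0
        · omega
        · exact (h' t h0).ge
    have hge' : ∀ m ≤ d, m ≤ P m := fun m hm => hge (d - m) m (by omega)
    have key : ∀ a b, π a < π b → π a + r a ≠ π b + r b := by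
      intro a b hab he
      have ha := h' a (by omega)
      have hsa := hsucc a
      have hm := hmono (show π a + 1 ≤ π b by omega)
      rcases Nat.eq_zero_or_pos (r b) with h0 | h0
      · have h2 := hsucc b
        have h3 := hge' (π b + 1) (hπlt b)
        have h4 : ∀ n, π a + 1 + n ≤ π b → P (π a + 1 + n) = π b := by
          intro n
          induction n with
          | zero => intro _; rw [add_zero]; omega
          | succ n ih =>
            intro hn
            have i1 := ih (by omega)
            have := hπlt b
            obtain ⟨t, ht⟩ := hsurj (π a + 1 + n) (by omega)
            have i2 := hsucc t
            rw [← add_assoc, ← ht, i2]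
            rw [← ht] at i1
            rcases Nat.eq_zero_or_pos (r t) with h5 | h5
            · omega
            · have := h' t h5
              omega
        have h5 := h4 (π b - (π a + 1)) (by omega)
        rw [show π a + 1 + (π b - (π a + 1)) = π b by omega] at h5
        omega
      · have := h' b h0
        omega
    refine ⟨?_, ?_⟩
    · intro a b hab
      apply hπinj
      rcases lt_trichotomy (π a) (π b) with hl | hl | hl
      · exact absurd hab (key a b hl)
      · exact hl
      · exact absurd hab.symm (key b a hl)
    · intro i
      have h1 := hsucc i
      have h2 := hge' (π i + 1) (hπlt i)
      have h3 := hmono (show π i + 1 ≤ d from hπlt i)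
      have h4 := hπlt i
      have hP0 : P 0 = 0 := by rw [hP]; simp
      rcases Nat.eq_zero_or_pos (r i) with h0 | h0
      · refine ⟨?_, by omega⟩
        by_contra hc
        have h5 : π i = 0 := by omega
        rw [h5] at h1 h2
        omega
      · have := h' i h0
        omega
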